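/- arXiv:1609.07531 — 3 statements merged into one kernel-verified Lean document; each statement's English description precedes it below -/
import Mathlib

section
/- For any vertex u of G, any sets S_0, S_1 of neighbors of u (padded with null), with S'_0 = S_0∖S_1 and S'_1 = S_1∖S_0 viewed as arrays of common length k, we have −δ_u(S_0,S_1) = max_{π∈Π[k]} Σ_{i=1}^k vote_u(S'_1[i], S'_0[π(i)]), where the maximum is over all permutations π of {1,…,k}. Consequently δ_u(S_0,S_1) + δ_u(S_1,S_0) ≤ 0, and for any two matchings M_0, M_1 and any vertex u, Δ_u(M_0,M_1) + Δ_u(M_1,M_0) ≤ 0. -/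
/-!
Since preferences are strict, `vote` is antisymmetric on the neighbors of a vertex together with
null (`vote_swap`). Reindexing the sum for a permutation `π` by `π⁻¹` therefore negates it and
exchanges the two arrays (`sum_vote_swap`), so the minimum defining `δ_u(S₀,S₁)` becomes, up to
sign, the maximum over the pairings read from the other side (`neg_deltaSet_eq_sup`).

For `δ_u(S₀,S₁) + δ_u(S₁,S₀) ≤ 0` it is enough to bound both minima by the value at the identity
pairing: the two values are opposite (`deltaSet_add_swap_nonpos`). For matchings, the sets `M(u)`
consist of neighbors of `u`, so this inequality applies directly.
-/

/-!
Many-to-many matchings with two-sided preferences, votes, and popularity,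
following "Popular Matchings in the Many-to-Many Setting".
-/

/-- The vote of a vertex with rank function `r` (smaller rank = more preferred)
comparing two options, where `none` stands for `null` (ranked below everything). -/
def vote {β : Type*} [DecidableEq β] (r : β → ℕ) : Option β → Option β → ℤ
  | none, none => 0
  | some _, none => 1
  | none, some _ => -1
  | some x, some y => if x = y then 0 else if r x < r y then 1 else -1

/-- The common length `k` of the arrays compared in `δ_u(S₀,S₁)`:
after padding the smaller of `S₀, S₁` with nulls and removing common elements. -/
def kOf {β : Type*} [DecidableEq β] (S₀ S₁ : Finset β) : ℕ :=
  max S₀.card S₁.card - (S₀ ∩ S₁).card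

/-- `S₀ ∖ S₁`, viewed as an array of `Option`s padded with `none` (null) to length `k`. -/
noncomputable def padded {β : Type*} [DecidableEq β] (S₀ S₁ : Finset β) (k : ℕ) : List (Option β) :=
  ((S₀ \ S₁).toList.map some) ++ List.replicate (k - (S₀ \ S₁).card) none

/-- `δ_u(S₀,S₁)`: the minimum, over all permutations `σ` of `{1,…,k}`, of
`Σ_i vote_u(S'₀[i], S'₁[σ(i)])`. -/
noncomputable def deltaSet {β : Type*} [DecidableEq β] (r : β → ℕ) (S₀ S₁ : Finset β) : ℤ :=
  Finset.univ.inf' ⟨1, Finset.mem_univ 1⟩ fun σ : Equiv.Perm (Fin (kOf S₀ S₁)) =>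
    ∑ i : Fin (kOf S₀ S₁),
      vote r ((padded S₀ S₁ (kOf S₀ S₁)).getD (i : ℕ) none)
             ((padded S₁ S₀ (kOf S₀ S₁)).getD (σ i : ℕ) none)

/-- A bipartite instance `G = (A ∪ B, E)` with capacities `≥ 1` and strict
preferences of every vertex over its neighbors (given by injective-on-neighbors
rank functions; smaller rank = more preferred). -/
structure PrefInstance (α β : Type*) [Fintype α] [Fintype β] [DecidableEq α] [DecidableEq β] where
  E : Finset (α × β)
  capA : α → ℕ
  capB : β → ℕ
  rankA : α → β → ℕ
  rankB : β → α → ℕ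
  capA_pos : ∀ a, 1 ≤ capA a
  capB_pos : ∀ b, 1 ≤ capB b
  rankA_injOn : ∀ a, Set.InjOn (rankA a) {b | (a, b) ∈ E}
  rankB_injOn : ∀ b, Set.InjOn (rankB b) {a | (a, b) ∈ E}

namespace PrefInstance

variable {α β : Type*} [Fintype α] [Fintype β] [DecidableEq α] [DecidableEq β]

/-- `M(a)`: the set of `B`-vertices matched to `a` in `M`. -/
def rowSet (M : Finset (α × β)) (a : α) : Finset β :=
  Finset.univ.filter fun b => (a, b) ∈ M

/-- `M(b)`: the set of `A`-vertices matched to `b` in `M`. -/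
def colSet (M : Finset (α × β)) (b : β) : Finset α :=
  Finset.univ.filter fun a => (a, b) ∈ M

variable (I : PrefInstance α β)

/-- `M` is a matching in `G`: a subset of `E` respecting all capacities. -/
def IsMatching (M : Finset (α × β)) : Prop :=
  M ⊆ I.E ∧ (∀ a, (rowSet M a).card ≤ I.capA a) ∧ (∀ b, (colSet M b).card ≤ I.capB b)

/-- `Δ_a(M₀,M₁) = δ_a(M₀(a), M₁(a))` for `a ∈ A`. -/
noncomputable def DeltaA (M₀ M₁ : Finset (α × β)) (a : α) : ℤ :=
  deltaSet (I.rankA a) (rowSet M₀ a) (rowSet M₁ a)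

/-- `Δ_b(M₀,M₁) = δ_b(M₀(b), M₁(b))` for `b ∈ B`. -/
noncomputable def DeltaB (M₀ M₁ : Finset (α × β)) (b : β) : ℤ :=
  deltaSet (I.rankB b) (colSet M₀ b) (colSet M₁ b)

/-- `Δ(M₀,M₁) = Σ_{u ∈ A∪B} Δ_u(M₀,M₁)`. -/
noncomputable def Delta (M₀ M₁ : Finset (α × β)) : ℤ :=
  (∑ a, I.DeltaA M₀ M₁ a) + ∑ b, I.DeltaB M₀ M₁ b

/-- `M` is a popular matching: `Δ(M,T) ≥ 0` against every matching `T`. -/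
def Popular (M : Finset (α × β)) : Prop :=
  I.IsMatching M ∧ ∀ T, I.IsMatching T → 0 ≤ I.Delta M T

/-- `M` is a weakly popular matching: `Δ(T,M) ≤ 0` for every matching `T`. -/
def WeaklyPopular (M : Finset (α × β)) : Prop :=
  I.IsMatching M ∧ ∀ T, I.IsMatching T → I.Delta T M ≤ 0

/-- The edge `(a,b) ∈ E ∖ M` blocks `M`. -/
def Blocks (M : Finset (α × β)) (a : α) (b : β) : Prop :=
  (a, b) ∈ I.E ∧ (a, b) ∉ M ∧
  ((rowSet M a).card < I.capA a ∨ ∃ b' ∈ rowSet M a, I.rankA a b < I.rankA a b') ∧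
  ((colSet M b).card < I.capB b ∨ ∃ a' ∈ colSet M b, I.rankB b a < I.rankB b a')

/-- `M` is a pairwise-stable matching: no edge blocks it. -/
def Stable (M : Finset (α × β)) : Prop :=
  I.IsMatching M ∧ ∀ a b, ¬ I.Blocks M a b

end PrefInstance

/-- Swapping the two options flips the vote. Strictness of the preferences is what is used here:
on a tie `r x = r y` with `x ≠ y`, `vote` is `-1` in both directions. -/
lemma vote_swap {β : Type*} [DecidableEq β] {r : β → ℕ} {s : Set β} (hr : Set.InjOn r s)
    {x y : Option β} (hx : ∀ b, x = some b → b ∈ s) (hy : ∀ b, y = some b → b ∈ s) :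
    vote r x y = - vote r y x := by
  rcases x with _ | x <;> rcases y with _ | y <;> simp only [vote] <;> try norm_num
  by_cases h : x = y
  · simp [h]
  · have hne : r x ≠ r y := fun e => h (hr (hx x rfl) (hy y rfl) e)
    rw [if_neg h, if_neg (Ne.symm h)]
    split_ifs <;> omega

lemma mem_of_padded_getD {β : Type*} [DecidableEq β] (S₀ S₁ : Finset β) (k i : ℕ) (b : β)
    (h : (padded S₀ S₁ k).getD i none = some b) : b ∈ S₀ := by
  have hm : some b ∈ padded S₀ S₁ k := by
    rw [List.getD_eq_getElem?_getD] at h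
    rcases hi : (padded S₀ S₁ k)[i]? with _ | c
    · simp [hi] at h
    · have hc : c = some b := by simpa [hi] using h
      exact hc ▸ List.mem_of_getElem? hi
  simp only [padded, List.mem_append, List.mem_map, Finset.mem_toList, Finset.mem_sdiff,
    List.mem_replicate] at hm
  rcases hm with ⟨c, hc, hcb⟩ | ⟨_, hn⟩
  · exact Option.some.inj hcb ▸ hc.1
  · simp at hn

/-- The sum for the pairing `σ`, read from the side of `S₁`, is the negated sum for the inverse
pairing read from the side of `S₀`. -/
lemma sum_vote_swap {β : Type*} [DecidableEq β] {r : β → ℕ} {s : Set β} (hr : Set.InjOn r s)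
    {S₀ S₁ : Finset β} (h₀ : ∀ b ∈ S₀, b ∈ s) (h₁ : ∀ b ∈ S₁, b ∈ s) (k : ℕ)
    (σ : Equiv.Perm (Fin k)) :
    ∑ i : Fin k, vote r ((padded S₁ S₀ k).getD (i : ℕ) none)
        ((padded S₀ S₁ k).getD (σ i : ℕ) none) =
      - ∑ i : Fin k, vote r ((padded S₀ S₁ k).getD (i : ℕ) none)
        ((padded S₁ S₀ k).getD (σ⁻¹ i : ℕ) none) := by
  rw [← Finset.sum_neg_distrib, ← Equiv.sum_comp σ (fun i : Fin k =>
    - vote r ((padded S₀ S₁ k).getD (i : ℕ) none) ((padded S₁ S₀ k).getD (σ⁻¹ i : ℕ) none))]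
  refine Finset.sum_congr rfl fun i _ => ?_
  rw [show σ⁻¹ (σ i) = i from σ.symm_apply_apply i]
  exact vote_swap hr (fun b hb => h₁ b (mem_of_padded_getD _ _ _ _ b hb))
    (fun b hb => h₀ b (mem_of_padded_getD _ _ _ _ b hb))

/-- The identity pairing bounds `deltaSet`. The length is a free variable `k` so that the bound
applies to `(S₀, S₁)` and `(S₁, S₀)` with the same index type. -/
lemma deltaSet_le_sum {β : Type*} [DecidableEq β] (r : β → ℕ) (S₀ S₁ : Finset β) (k : ℕ)
    (hk : k = kOf S₀ S₁) :
    deltaSet r S₀ S₁ ≤ ∑ i : Fin k, vote r ((padded S₀ S₁ k).getD (i : ℕ) none)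
      ((padded S₁ S₀ k).getD (i : ℕ) none) := by
  subst hk
  exact Finset.inf'_le (s := Finset.univ) (fun σ : Equiv.Perm (Fin (kOf S₀ S₁)) =>
    ∑ i : Fin (kOf S₀ S₁), vote r ((padded S₀ S₁ (kOf S₀ S₁)).getD (i : ℕ) none)
      ((padded S₁ S₀ (kOf S₀ S₁)).getD (σ i : ℕ) none)) (Finset.mem_univ 1)

lemma kOf_comm {β : Type*} [DecidableEq β] (S₀ S₁ : Finset β) : kOf S₀ S₁ = kOf S₁ S₀ := by
  simp only [kOf, max_comm, Finset.inter_comm]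

lemma deltaSet_add_swap_nonpos {β : Type*} [DecidableEq β] {r : β → ℕ} {s : Set β}
    (hr : Set.InjOn r s) {S₀ S₁ : Finset β} (h₀ : ∀ b ∈ S₀, b ∈ s) (h₁ : ∀ b ∈ S₁, b ∈ s) :
    deltaSet r S₀ S₁ + deltaSet r S₁ S₀ ≤ 0 := by
  have e₀ := deltaSet_le_sum r S₀ S₁ _ rfl
  have e₁ := deltaSet_le_sum r S₁ S₀ _ (kOf_comm S₀ S₁)
  have e := sum_vote_swap hr h₀ h₁ (kOf S₀ S₁) 1
  simp only [inv_one, Equiv.Perm.one_apply] at e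
  linarith

lemma neg_deltaSet_eq_sup {β : Type*} [DecidableEq β] {r : β → ℕ} {s : Set β}
    (hr : Set.InjOn r s) {S₀ S₁ : Finset β} (h₀ : ∀ b ∈ S₀, b ∈ s) (h₁ : ∀ b ∈ S₁, b ∈ s) :
    - deltaSet r S₀ S₁ =
      Finset.univ.sup' ⟨1, Finset.mem_univ 1⟩
        fun π : Equiv.Perm (Fin (kOf S₀ S₁)) =>
          ∑ i : Fin (kOf S₀ S₁),
            vote r ((padded S₁ S₀ (kOf S₀ S₁)).getD (i : ℕ) none)
              ((padded S₀ S₁ (kOf S₀ S₁)).getD (π i : ℕ) none) := by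
  apply le_antisymm
  · obtain ⟨σ, -, hσ⟩ := Finset.exists_mem_eq_inf' (s := Finset.univ) ⟨1, Finset.mem_univ 1⟩
      (fun σ : Equiv.Perm (Fin (kOf S₀ S₁)) =>
        ∑ i : Fin (kOf S₀ S₁), vote r ((padded S₀ S₁ (kOf S₀ S₁)).getD (i : ℕ) none)
          ((padded S₁ S₀ (kOf S₀ S₁)).getD (σ i : ℕ) none))
    have e := sum_vote_swap hr h₀ h₁ (kOf S₀ S₁) σ⁻¹
    rw [inv_inv] at e
    rw [deltaSet, hσ, ← e]
    exact Finset.le_sup' (s := Finset.univ) (fun π : Equiv.Perm (Fin (kOf S₀ S₁)) =>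
      ∑ i : Fin (kOf S₀ S₁), vote r ((padded S₁ S₀ (kOf S₀ S₁)).getD (i : ℕ) none)
        ((padded S₀ S₁ (kOf S₀ S₁)).getD (π i : ℕ) none)) (Finset.mem_univ σ⁻¹)
  · refine Finset.sup'_le _ _ fun π _ => ?_
    rw [sum_vote_swap hr h₀ h₁ (kOf S₀ S₁) π]
    exact neg_le_neg (Finset.inf'_le (s := Finset.univ)
      (fun σ : Equiv.Perm (Fin (kOf S₀ S₁)) =>
        ∑ i : Fin (kOf S₀ S₁), vote r ((padded S₀ S₁ (kOf S₀ S₁)).getD (i : ℕ) none)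
          ((padded S₁ S₀ (kOf S₀ S₁)).getD (σ i : ℕ) none)) (Finset.mem_univ π⁻¹))

/-- For any vertex `u` of `G` and sets `S₀, S₁` of neighbors of `u`,
`−δ_u(S₀,S₁) = max_{π ∈ Π[k]} Σ_i vote_u(S'₁[i], S'₀[π(i)])`; consequently
`δ_u(S₀,S₁) + δ_u(S₁,S₀) ≤ 0`, and for any two matchings `M₀, M₁` and any vertex `u`,
`Δ_u(M₀,M₁) + Δ_u(M₁,M₀) ≤ 0`. -/
theorem statement0 {α β : Type*} [Fintype α] [Fintype β] [DecidableEq α] [DecidableEq β]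
    (I : PrefInstance α β) (a : α) (S₀ S₁ : Finset β)
    (h₀ : ∀ b ∈ S₀, (a, b) ∈ I.E) (h₁ : ∀ b ∈ S₁, (a, b) ∈ I.E) :
    (- deltaSet (I.rankA a) S₀ S₁ =
      Finset.univ.sup' ⟨1, Finset.mem_univ 1⟩
        fun π : Equiv.Perm (Fin (kOf S₀ S₁)) =>
          ∑ i : Fin (kOf S₀ S₁),
            vote (I.rankA a) ((padded S₁ S₀ (kOf S₀ S₁)).getD (i : ℕ) none)
              ((padded S₀ S₁ (kOf S₀ S₁)).getD (π i : ℕ) none)) ∧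
    deltaSet (I.rankA a) S₀ S₁ + deltaSet (I.rankA a) S₁ S₀ ≤ 0 ∧
    (∀ M₀ M₁ : Finset (α × β), I.IsMatching M₀ → I.IsMatching M₁ →
      (∀ u : α, I.DeltaA M₀ M₁ u + I.DeltaA M₁ M₀ u ≤ 0) ∧
      (∀ u : β, I.DeltaB M₀ M₁ u + I.DeltaB M₁ M₀ u ≤ 0)) := by
  refine ⟨neg_deltaSet_eq_sup (I.rankA_injOn a) h₀ h₁,
    deltaSet_add_swap_nonpos (I.rankA_injOn a) h₀ h₁, fun M₀ M₁ hM₀ hM₁ => ⟨fun u => ?_, fun u => ?_⟩⟩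
  · refine deltaSet_add_swap_nonpos (I.rankA_injOn u) (fun b hb => hM₀.1 ?_) (fun b hb => hM₁.1 ?_)
    · exact (Finset.mem_filter.mp hb).2
    · exact (Finset.mem_filter.mp hb).2
  · refine deltaSet_add_swap_nonpos (I.rankB_injOn u) (fun b hb => hM₀.1 ?_) (fun b hb => hM₁.1 ?_)
    · exact (Finset.mem_filter.mp hb).2
    · exact (Finset.mem_filter.mp hb).2
end

section
/- Let N be a matching in G. For every matching T in G there exists an (A'∪B')-complete matching T* in the graph G'_N such that wt_N(T*) = −Δ(N,T), where wt_N(T*) is the sum of the edge weights wt_N(e) over the edges e of T*. -/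
namespace PrefInstance

variable {α β : Type*} [Fintype α] [Fintype β] [DecidableEq α] [DecidableEq β]
variable (I : PrefInstance α β)

/-- `A'`: the set of clones `a_i`, `1 ≤ i ≤ cap(a)`, of the vertices of `A`. -/
abbrev CloneA := (a : α) × Fin (I.capA a)

/-- `B'`: the set of clones `b_j`, `1 ≤ j ≤ cap(b)`, of the vertices of `B`. -/
abbrev CloneB := (b : β) × Fin (I.capB b)

/-- `N'` is a realization of the matching `N` on the cloned vertex sets: a
(one-to-one) matching on `A' × B'` whose projection is a bijection onto `N`. -/
def IsRealization (N : Finset (α × β)) (N' : Finset (I.CloneA × I.CloneB)) : Prop :=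
  (∀ e ∈ N', ∀ f ∈ N', e.1 = f.1 → e = f) ∧
  (∀ e ∈ N', ∀ f ∈ N', e.2 = f.2 → e = f) ∧
  N'.image (fun e => (e.1.1, e.2.1)) = N ∧
  N'.card = N.card

/-- The partner of `x ∈ A'` in a one-to-one matching `N'` on clones (`none` if unmatched,
i.e. matched to the last resort `ℓ(x)` in `N*`). -/
noncomputable def partnerA (N' : Finset (I.CloneA × I.CloneB)) (x : I.CloneA) :
    Option I.CloneB :=
  if h : ∃ y, (x, y) ∈ N' then some h.choose else none

/-- The partner of `y ∈ B'` in a one-to-one matching `N'` on clones (`none` if unmatched). -/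
noncomputable def partnerB (N' : Finset (I.CloneA × I.CloneB)) (y : I.CloneB) :
    Option I.CloneA :=
  if h : ∃ x, (x, y) ∈ N' then some h.choose else none

/-- `(x, y) ∈ A' × B'` is an edge of the graph `G'_N`: either the underlying pair is an
edge of `E ∖ N` (all clone copies present), or `(x,y)` is the unique copy in `N'` of an
edge of `N`. -/
def GNEdge (N : Finset (α × β)) (N' : Finset (I.CloneA × I.CloneB))
    (x : I.CloneA) (y : I.CloneB) : Prop :=
  ((x.1, y.1) ∈ I.E ∧ (x.1, y.1) ∉ N) ∨ (x, y) ∈ N'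

/-- The weight `wt_N(x,y) = vote_a(b, N*(a_i)) + vote_b(a, N*(b_j))` of an edge of `G'_N`
lying in `A' × B'` (a last-resort partner in `N*` is read as null). -/
noncomputable def wtE (N' : Finset (I.CloneA × I.CloneB))
    (x : I.CloneA) (y : I.CloneB) : ℤ :=
  vote (I.rankA x.1) (some y.1) (Option.map Sigma.fst (I.partnerA N' x)) +
  vote (I.rankB y.1) (some x.1) (Option.map Sigma.fst (I.partnerB N' y))

/-- A one-to-one matching on the clone sets (each clone is in at most one edge).
Together with the implicit last-resort edges for unmatched clones, this represents
an `(A' ∪ B')`-complete matching in `G'_N`. -/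
def IsCloneMatching (T' : Finset (I.CloneA × I.CloneB)) : Prop :=
  (∀ e ∈ T', ∀ f ∈ T', e.1 = f.1 → e = f) ∧ (∀ e ∈ T', ∀ f ∈ T', e.2 = f.2 → e = f)

/-- The weight `wt_N` of the `(A' ∪ B')`-complete matching represented by `T'`:
the sum of the weights of its `A' × B'` edges plus, for every clone left unmatched
in `T'` (hence matched to its last resort), the weight `wt_N(v, ℓ(v))`, which is
`-1` if `v` is matched in `N'` and `0` otherwise. -/
noncomputable def wtTotal (N' T' : Finset (I.CloneA × I.CloneB)) : ℤ :=
  (∑ e ∈ T', I.wtE N' e.1 e.2) +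
  (∑ x : I.CloneA,
    if ∀ y, (x, y) ∉ T' then (if ∃ y, (x, y) ∈ N' then (-1 : ℤ) else 0) else 0) +
  (∑ y : I.CloneB,
    if ∀ x, (x, y) ∉ T' then (if ∃ x, (x, y) ∈ N' then (-1 : ℤ) else 0) else 0)

/-- A 2-level witness for `N` (with realization `N'`): partitions
`A' = A'₀ ∪ A'₁` and `B' = B'₀ ∪ B'₁` (encoded by level functions `lA, lB`, where
`true` means level 1) such that clones of `A'` unmatched in `N'` are in `A'₁`, clones
of `B'` unmatched in `N'` are in `B'₀`, `N' ⊆ (A'₀ × B'₀) ∪ (A'₁ × B'₁)`, every edge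
of `G'_N` in `A'₁ × B'₀` has weight `-2`, and every edge of `G'_N` in
`(A'₀ × B'₀) ∪ (A'₁ × B'₁)` has weight `≤ 0`. -/
def TwoLevelWitness (N : Finset (α × β)) (N' : Finset (I.CloneA × I.CloneB))
    (lA : I.CloneA → Bool) (lB : I.CloneB → Bool) : Prop :=
  (∀ x : I.CloneA, (∀ y, (x, y) ∉ N') → lA x = true) ∧
  (∀ y : I.CloneB, (∀ x, (x, y) ∉ N') → lB y = false) ∧
  (∀ e ∈ N', lA e.1 = lB e.2) ∧
  (∀ x y, I.GNEdge N N' x y → lA x = true → lB y = false → I.wtE N' x y = -2) ∧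
  (∀ x y, I.GNEdge N N' x y → lA x = lB y → I.wtE N' x y ≤ 0)

end PrefInstance

/-! ### Enumerations of a set by padded arrays -/

/-- The array `f`, with null entries allowed, lists every element of `S` exactly once and has
no other non-null entry. -/
def Enumerates {X γ : Type*} (f : X → Option γ) (S : Finset γ) : Prop :=
  (∀ x s, f x = some s → s ∈ S) ∧ (∀ s ∈ S, ∃ x, f x = some s) ∧
    ∀ x y s, f x = some s → f y = some s → x = y

lemma Enumerates.card_none {X γ : Type*} [Fintype X] [DecidableEq γ] {f : X → Option γ}
    {S : Finset γ} (h : Enumerates f S) :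
    (Finset.univ.filter fun x => f x = none).card + S.card = Fintype.card X := by
  obtain ⟨h1, h2, h3⟩ := h
  choose g hg using h2
  have hS : S.card = (Finset.univ.filter fun x => ¬ f x = none).card := by
    refine Finset.card_bij (fun s hs => g s hs) ?_ ?_ ?_
    · intro s hs
      simp [hg s hs]
    · intro s hs t ht hst
      have := hg s hs
      rw [hst, hg t ht] at this
      exact (Option.some_injective _ this).symm
    · intro x hx
      obtain ⟨s, hs⟩ := Option.ne_none_iff_exists'.1 (Finset.mem_filter.1 hx).2
      exact ⟨s, h1 x s hs, h3 _ _ s (hg s (h1 x s hs)) hs⟩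
  rw [hS, Finset.card_filter_add_card_filter_not, Finset.card_univ]

lemma Enumerates.card_some {X γ : Type*} [Fintype X] [DecidableEq γ] {f : X → Option γ}
    {S : Finset γ} (h : Enumerates f S) (s : γ) :
    (Finset.univ.filter fun x => f x = some s).card = if s ∈ S then 1 else 0 := by
  obtain ⟨h1, h2, h3⟩ := h
  split_ifs with hs
  · obtain ⟨x, hx⟩ := h2 s hs
    rw [Finset.card_eq_one]
    refine ⟨x, ?_⟩
    ext y
    simp only [Finset.mem_filter, Finset.mem_univ, true_and, Finset.mem_singleton]
    exact ⟨fun hy => h3 y x s hy hx, fun hy => hy ▸ hx⟩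
  · rw [Finset.card_eq_zero, Finset.filter_eq_empty_iff]
    exact fun x _ hx => hs (h1 x s hx)

/-- Two enumerations of the same set of the same length agree up to reindexing, since all their
fibers have equal size. -/
lemma Enumerates.exists_equiv {X Y γ : Type*} [Fintype X] [Fintype Y] [DecidableEq γ]
    {f : X → Option γ} {g : Y → Option γ} {S : Finset γ}
    (hf : Enumerates f S) (hg : Enumerates g S) (hc : Fintype.card X = Fintype.card Y) :
    ∃ e : X ≃ Y, ∀ x, g (e x) = f x := by
  have key : ∀ c, Nonempty ({x // f x = c} ≃ {y // g y = c}) := by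
    intro c
    rw [← Fintype.card_eq, Fintype.card_subtype, Fintype.card_subtype]
    cases c with
    | none =>
      have h1 := hf.card_none
      have h2 := hg.card_none
      omega
    | some s => rw [hf.card_some, hg.card_some]
  exact ⟨Equiv.ofFiberEquiv fun c => (key c).some,
    Equiv.ofFiberEquiv_map fun c => (key c).some⟩

lemma Enumerates.comp_equiv {X Y γ : Type*} {f : Y → Option γ} {S : Finset γ}
    (h : Enumerates f S) (e : X ≃ Y) : Enumerates (fun x => f (e x)) S := by
  obtain ⟨h1, h2, h3⟩ := h
  refine ⟨fun x s hx => h1 _ s hx, fun s hs => ?_,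
    fun x y s hx hy => e.injective (h3 _ _ s hx hy)⟩
  obtain ⟨y, hy⟩ := h2 s hs
  exact ⟨e.symm y, by simpa using hy⟩

lemma padded_enumerates {γ : Type*} [DecidableEq γ] (S₀ S₁ : Finset γ) (k : ℕ)
    (hk : (S₀ \ S₁).card ≤ k) :
    Enumerates (fun i : Fin k => (padded S₀ S₁ k).getD (i : ℕ) none) (S₀ \ S₁) := by
  have hval : ∀ i s, (padded S₀ S₁ k).getD i none = some s ↔
      (S₀ \ S₁).toList[i]? = some s := by
    intro i s
    unfold padded
    rw [List.getD_eq_getElem?_getD, List.getElem?_append]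
    split_ifs with h
    · rw [List.length_map] at h
      simp [List.getElem?_eq_getElem h]
    · rw [List.length_map] at h
      rw [List.getElem?_replicate, List.getElem?_eq_none (not_lt.1 h)]
      split_ifs <;> simp
  refine ⟨fun i s hi => ?_, fun s hs => ?_, fun i j s hi hj => ?_⟩
  · exact Finset.mem_toList.1 (List.mem_of_getElem? ((hval _ _).1 hi))
  · obtain ⟨i, hi⟩ := List.mem_iff_getElem?.1 (Finset.mem_toList.2 hs)
    have hlt : i < (S₀ \ S₁).toList.length := (List.getElem?_eq_some_iff.1 hi).1
    rw [Finset.length_toList] at hlt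
    exact ⟨⟨i, hlt.trans_le hk⟩, (hval _ _).2 hi⟩
  · have h1 := (hval _ _).1 hi
    have h2 := (hval _ _).1 hj
    have hlt := (List.getElem?_eq_some_iff.1 h1).1
    exact Fin.ext ((List.getElem?_inj hlt (Finset.nodup_toList _)).1 (h1.trans h2.symm))

/-- Appending the common elements `S ∩ R` and `n` nulls to an enumeration of `S \ R` gives an
enumeration of `S`. -/
lemma Enumerates.append {X γ : Type*} [DecidableEq γ] {u : X → Option γ} {S R C : Finset γ}
    (hu : Enumerates u (S \ R)) (hC : C = S ∩ R) (n : ℕ) :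
    Enumerates (Sum.elim u (Sum.elim (fun c : C => some c.1) (fun _ : Fin n => none))) S := by
  obtain ⟨h1, h2, h3⟩ := hu
  subst hC
  refine ⟨?_, fun s hs => ?_, ?_⟩
  · rintro (x | c | i) s hx
    · exact (Finset.mem_sdiff.1 (h1 x s hx)).1
    · have := (Finset.mem_inter.1 c.2).1
      simp at hx
      rwa [hx] at this
    · simp at hx
  · by_cases hR : s ∈ R
    · exact ⟨Sum.inr (Sum.inl ⟨s, Finset.mem_inter.2 ⟨hs, hR⟩⟩), rfl⟩
    · obtain ⟨x, hx⟩ := h2 s (Finset.mem_sdiff.2 ⟨hs, hR⟩)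
      exact ⟨Sum.inl x, hx⟩
  · have hd : ∀ x (c : ↥(S ∩ R)), u x ≠ some c.1 := fun x c hx =>
      (Finset.mem_sdiff.1 (h1 x _ hx)).2 (Finset.mem_inter.1 c.2).2
    rintro (x | c | i) (y | d | j) s hx hy
    · rw [h3 x y s hx hy]
    · exact absurd (hx.trans hy.symm) (hd x d)
    · simp at hy
    · exact absurd (hy.trans hx.symm) (hd y c)
    · simp only [Sum.elim_inr, Sum.elim_inl, Option.some.injEq] at hx hy
      rw [Subtype.ext (hx.trans hy.symm)]
    · simp at hy
    · simp at hx
    · simp at hx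
    · simp at hx

/-! ### Votes at a single vertex -/

lemma vote_self {γ : Type*} [DecidableEq γ] (r : γ → ℕ) (o : Option γ) : vote r o o = 0 := by
  cases o <;> simp [vote]

/-- Strictness of preferences makes votes antisymmetric. -/
lemma vote_swap_s3 {γ : Type*} [DecidableEq γ] (r : γ → ℕ) (o p : Option γ)
    (h : ∀ x y, o = some x → p = some y → r x = r y → x = y) :
    vote r o p = - vote r p o := by
  cases o with
  | none => cases p <;> simp [vote]
  | some x =>
    cases p with
    | none => simp [vote]
    | some y =>
      have := h x y rfl rfl
      by_cases hxy : x = y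
      · simp [vote, hxy]
      · have hr : r x ≠ r y := fun e => hxy (this e)
        simp only [vote, hxy, Ne.symm hxy, if_false]
        split_ifs <;> omega

/-- The assignment at one vertex `u` with clone set `X`. If the clones carry the partners `p` in
`S₀ = N(u)`, the elements of `S₁ = T(u)` can be distributed over the clones so that common partners
stay where they are and the votes of the clones for `T` against `N` add up to `-δ_u(S₀,S₁)`. -/
lemma exists_assignment {X γ : Type*} [Fintype X] [DecidableEq γ] (r : γ → ℕ)
    (p : X → Option γ) (S₀ S₁ : Finset γ) (hp : Enumerates p S₀)
    (hr : Set.InjOn r (S₀ ∪ S₁ : Set γ)) (hcard₁ : S₁.card ≤ Fintype.card X) :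
    ∃ q : X → Option γ, Enumerates q S₁ ∧
      (∀ x s, p x = some s → s ∈ S₁ → q x = some s) ∧
      ∑ x, vote r (q x) (p x) = - deltaSet r S₀ S₁ := by
  have hcard₀ : S₀.card ≤ Fintype.card X := by
    have := hp.card_none
    omega
  have hi₀ := Finset.card_sdiff_add_card_inter S₀ S₁
  have hi₁ := Finset.card_sdiff_add_card_inter S₁ S₀
  rw [Finset.inter_comm S₁ S₀] at hi₁
  obtain ⟨σ, -, hσ⟩ := Finset.exists_mem_eq_inf'
    (⟨1, Finset.mem_univ 1⟩ : (Finset.univ : Finset (Equiv.Perm (Fin (kOf S₀ S₁)))).Nonempty)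
    (fun σ : Equiv.Perm (Fin (kOf S₀ S₁)) => ∑ i : Fin (kOf S₀ S₁),
      vote r ((padded S₀ S₁ (kOf S₀ S₁)).getD (i : ℕ) none)
             ((padded S₁ S₀ (kOf S₀ S₁)).getD (σ i : ℕ) none))
  change deltaSet r S₀ S₁ = _ at hσ
  have hkdef : kOf S₀ S₁ = max S₀.card S₁.card - (S₀ ∩ S₁).card := rfl
  generalize kOf S₀ S₁ = k at σ hσ hkdef
  have hu := padded_enumerates S₀ S₁ k (by omega)
  have hv := (padded_enumerates S₁ S₀ k (by omega)).comp_equiv σ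
  set u : Fin k → Option γ := fun i => (padded S₀ S₁ k).getD (i : ℕ) none with hu_def
  set v : Fin k → Option γ := fun i => (padded S₁ S₀ k).getD (σ i : ℕ) none with hv_def
  -- The clones not compared by `σ`: those of common partners, and those idle in both matchings.
  set n := Fintype.card X - max S₀.card S₁.card with hn
  have hU := hu.append (C := S₀ ∩ S₁) rfl n
  have hV := hv.append (C := S₀ ∩ S₁) (Finset.inter_comm _ _) n
  obtain ⟨e, he⟩ := hp.exists_equiv hU (by
    simp only [Fintype.card_sum, Fintype.card_fin, Fintype.card_coe]
    omega)
  refine ⟨_, hV.comp_equiv e, fun x s hx hs => ?_, ?_⟩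
  · have hs₀ := hp.1 x s hx
    have : e x = Sum.inr (Sum.inl ⟨s, Finset.mem_inter.2 ⟨hs₀, hs⟩⟩) :=
      hU.2.2 _ _ s ((he x).trans hx) rfl
    rw [this]
    rfl
  · simp only [← he]
    rw [Equiv.sum_comp e (fun z => vote r
      (Sum.elim v (Sum.elim (fun c : ↥(S₀ ∩ S₁) => some c.1) (fun _ : Fin n => none)) z)
      (Sum.elim u (Sum.elim (fun c : ↥(S₀ ∩ S₁) => some c.1) (fun _ : Fin n => none)) z))]
    simp only [Fintype.sum_sum_type, Sum.elim_inl, Sum.elim_inr, vote_self,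
      Finset.sum_const_zero, add_zero]
    rw [hσ, ← Finset.sum_neg_distrib]
    refine Finset.sum_congr rfl fun i _ => vote_swap_s3 r _ _ fun x y hx hy hxy => ?_
    exact hr (Or.inr (Finset.mem_sdiff.1 (hv.1 i x hx)).1)
      (Or.inl (Finset.mem_sdiff.1 (hu.1 i y hy)).1) hxy

/-! ### Partners in the realization and the weight of a clone matching -/

/-- Edges of a clone matching together with the last-resort edges on one side contribute the votes
of all clones of that side. -/
lemma sum_votes_eq {ι X γ δ : Type*} [Fintype X] [DecidableEq X] [DecidableEq γ] (M : Finset ι)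
    (φ : ι → X) (hφ : ∀ e ∈ M, ∀ f ∈ M, φ e = φ f → e = f)
    (r : X → γ → ℕ) (q : X → Option γ) (p : X → Option δ) (m : δ → γ) (w : ι → γ)
    (hw : ∀ e ∈ M, q (φ e) = some (w e)) (L : X → ℤ)
    (hL₀ : ∀ e ∈ M, L (φ e) = 0)
    (hL : ∀ x, (∀ e ∈ M, φ e ≠ x) → L x = vote (r x) (q x) (Option.map m (p x))) :
    ∑ e ∈ M, vote (r (φ e)) (some (w e)) (Option.map m (p (φ e))) + ∑ x, L x =
      ∑ x, vote (r x) (q x) (Option.map m (p x)) := by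
  have h1 : ∑ e ∈ M, vote (r (φ e)) (some (w e)) (Option.map m (p (φ e))) =
      ∑ x ∈ M.image φ, vote (r x) (q x) (Option.map m (p x)) := by
    rw [Finset.sum_image (fun e he f hf => hφ e he f hf)]
    exact Finset.sum_congr rfl fun e he => by rw [hw e he]
  have h2 : ∑ x, L x =
      ∑ x ∈ (M.image φ)ᶜ, vote (r x) (q x) (Option.map m (p x)) := by
    rw [← Finset.sum_add_sum_compl (M.image φ) L, Finset.sum_eq_zero, zero_add]
    · refine Finset.sum_congr rfl fun x hx => hL x fun e he hex => ?_
      exact Finset.mem_compl.1 hx (Finset.mem_image.2 ⟨e, he, hex⟩)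
    · intro x hx
      obtain ⟨e, he, rfl⟩ := Finset.mem_image.1 hx
      exact hL₀ e he
  rw [h1, h2, Finset.sum_add_sum_compl]

namespace PrefInstance

variable {α β : Type*} [Fintype α] [Fintype β] [DecidableEq α] [DecidableEq β]
variable {I : PrefInstance α β} {N : Finset (α × β)} {N' : Finset (I.CloneA × I.CloneB)}

lemma IsRealization.partnerA_eq_some (h : I.IsRealization N N') (x : I.CloneA) (y : I.CloneB) :
    I.partnerA N' x = some y ↔ (x, y) ∈ N' := by
  unfold partnerA
  split_ifs with hx
  · rw [Option.some.injEq]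
    refine ⟨fun e => e ▸ hx.choose_spec, fun hy => ?_⟩
    exact congrArg Prod.snd (h.1 _ hx.choose_spec _ hy rfl)
  · simp only [false_iff]
    exact fun hy => hx ⟨y, hy⟩

lemma IsRealization.partnerB_eq_some (h : I.IsRealization N N') (x : I.CloneA) (y : I.CloneB) :
    I.partnerB N' y = some x ↔ (x, y) ∈ N' := by
  unfold partnerB
  split_ifs with hx
  · rw [Option.some.injEq]
    refine ⟨fun e => e ▸ hx.choose_spec, fun hy => ?_⟩
    exact congrArg Prod.fst (h.2.1 _ hx.choose_spec _ hy rfl)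
  · simp only [false_iff]
    exact fun hy => hx ⟨x, hy⟩

lemma IsRealization.mem (h : I.IsRealization N N') {x : I.CloneA} {y : I.CloneB}
    (hxy : (x, y) ∈ N') : (x.1, y.1) ∈ N := by
  rw [← h.2.2.1]
  exact Finset.mem_image.2 ⟨_, hxy, rfl⟩

lemma IsRealization.exists_mem (h : I.IsRealization N N') {a : α} {b : β} (hab : (a, b) ∈ N) :
    ∃ i j, ((⟨a, i⟩, ⟨b, j⟩) : I.CloneA × I.CloneB) ∈ N' := by
  rw [← h.2.2.1] at hab
  obtain ⟨⟨⟨a', i⟩, ⟨b', j⟩⟩, he, heq⟩ := Finset.mem_image.1 hab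
  simp only [Prod.mk.injEq] at heq
  obtain ⟨rfl, rfl⟩ := heq
  exact ⟨i, j, he⟩

lemma IsRealization.eq_of_proj (h : I.IsRealization N N') {e f : I.CloneA × I.CloneB}
    (he : e ∈ N') (hf : f ∈ N') (h1 : e.1.1 = f.1.1) (h2 : e.2.1 = f.2.1) : e = f := by
  have hinj : Set.InjOn (fun e : I.CloneA × I.CloneB => (e.1.1, e.2.1)) N' := by
    rw [← Finset.card_image_iff, h.2.2.1, h.2.2.2]
  exact hinj he hf (Prod.ext h1 h2)

lemma IsRealization.enumeratesA (h : I.IsRealization N N') (a : α) :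
    Enumerates (fun i : Fin (I.capA a) => Option.map Sigma.fst (I.partnerA N' ⟨a, i⟩))
      (rowSet N a) := by
  refine ⟨fun i b hb => ?_, fun b hb => ?_, fun i j b hi hj => ?_⟩
  · obtain ⟨y, hy, rfl⟩ := Option.map_eq_some_iff.1 hb
    exact Finset.mem_filter.2 ⟨Finset.mem_univ _, h.mem ((h.partnerA_eq_some _ _).1 hy)⟩
  · obtain ⟨i, j, hij⟩ := h.exists_mem (Finset.mem_filter.1 hb).2
    exact ⟨i, Option.map_eq_some_iff.2 ⟨_, (h.partnerA_eq_some _ _).2 hij, rfl⟩⟩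
  · obtain ⟨y, hy, rfl⟩ := Option.map_eq_some_iff.1 hi
    obtain ⟨z, hz, hzy⟩ := Option.map_eq_some_iff.1 hj
    have := h.eq_of_proj ((h.partnerA_eq_some _ _).1 hy) ((h.partnerA_eq_some _ _).1 hz) rfl
      hzy.symm
    simpa using congrArg Prod.fst this

lemma IsRealization.enumeratesB (h : I.IsRealization N N') (b : β) :
    Enumerates (fun j : Fin (I.capB b) => Option.map Sigma.fst (I.partnerB N' ⟨b, j⟩))
      (colSet N b) := by
  refine ⟨fun i a ha => ?_, fun a ha => ?_, fun i j a hi hj => ?_⟩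
  · obtain ⟨x, hx, rfl⟩ := Option.map_eq_some_iff.1 ha
    exact Finset.mem_filter.2 ⟨Finset.mem_univ _, h.mem ((h.partnerB_eq_some _ _).1 hx)⟩
  · obtain ⟨i, j, hij⟩ := h.exists_mem (Finset.mem_filter.1 ha).2
    exact ⟨j, Option.map_eq_some_iff.2 ⟨_, (h.partnerB_eq_some _ _).2 hij, rfl⟩⟩
  · obtain ⟨x, hx, rfl⟩ := Option.map_eq_some_iff.1 hi
    obtain ⟨z, hz, hzx⟩ := Option.map_eq_some_iff.1 hj
    have := h.eq_of_proj ((h.partnerB_eq_some _ _).1 hx) ((h.partnerB_eq_some _ _).1 hz)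
      hzx.symm rfl
    simpa using congrArg Prod.snd this

lemma vote_none_partnerA (x : I.CloneA) :
    vote (I.rankA x.1) none (Option.map Sigma.fst (I.partnerA N' x)) =
      if ∃ y, (x, y) ∈ N' then (-1 : ℤ) else 0 := by
  unfold partnerA
  split_ifs <;> simp [vote]

lemma vote_none_partnerB (y : I.CloneB) :
    vote (I.rankB y.1) none (Option.map Sigma.fst (I.partnerB N' y)) =
      if ∃ x, (x, y) ∈ N' then (-1 : ℤ) else 0 := by
  unfold partnerB
  split_ifs <;> simp [vote]

end PrefInstance

/-- Let `N` be a matching in `G` (with a fixed realization `N'` on the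
cloned vertex sets). For every matching `T` in `G` there is an `(A' ∪ B')`-complete
matching `T*` of `G'_N` (represented by its set `T'` of `A' × B'` edges) with
`wt_N(T*) = −Δ(N,T)`. -/
theorem statement3 {α β : Type*} [Fintype α] [Fintype β] [DecidableEq α] [DecidableEq β]
    (I : PrefInstance α β) (N : Finset (α × β)) (hN : I.IsMatching N)
    (N' : Finset (I.CloneA × I.CloneB)) (hN' : I.IsRealization N N')
    (T : Finset (α × β)) (hT : I.IsMatching T) :
    ∃ T' : Finset (I.CloneA × I.CloneB),
      I.IsCloneMatching T' ∧ (∀ e ∈ T', I.GNEdge N N' e.1 e.2) ∧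
      I.wtTotal N' T' = - I.Delta N T := by
  have hA : ∀ a, ∃ q : Fin (I.capA a) → Option β, Enumerates q (PrefInstance.rowSet T a) ∧
      (∀ i b, Option.map Sigma.fst (I.partnerA N' ⟨a, i⟩) = some b →
        b ∈ PrefInstance.rowSet T a → q i = some b) ∧
      ∑ i, vote (I.rankA a) (q i) (Option.map Sigma.fst (I.partnerA N' ⟨a, i⟩)) =
        - I.DeltaA N T a := by
    intro a
    refine exists_assignment (I.rankA a) _ _ _ (hN'.enumeratesA a)
      ((I.rankA_injOn a).mono ?_) (by simpa using hT.2.1 a)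
    rintro b (hb | hb)
    · exact hN.1 (Finset.mem_filter.1 hb).2
    · exact hT.1 (Finset.mem_filter.1 hb).2
  have hB : ∀ b, ∃ q : Fin (I.capB b) → Option α, Enumerates q (PrefInstance.colSet T b) ∧
      (∀ j a, Option.map Sigma.fst (I.partnerB N' ⟨b, j⟩) = some a →
        a ∈ PrefInstance.colSet T b → q j = some a) ∧
      ∑ j, vote (I.rankB b) (q j) (Option.map Sigma.fst (I.partnerB N' ⟨b, j⟩)) =
        - I.DeltaB N T b := by
    intro b
    refine exists_assignment (I.rankB b) _ _ _ (hN'.enumeratesB b)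
      ((I.rankB_injOn b).mono ?_) (by simpa using hT.2.2 b)
    rintro a (ha | ha)
    · exact hN.1 (Finset.mem_filter.1 ha).2
    · exact hT.1 (Finset.mem_filter.1 ha).2
  choose qA hqA hA₁ hA₂ using hA
  choose qB hqB hB₁ hB₂ using hB
  have memA : ∀ a b, b ∈ PrefInstance.rowSet T a ↔ (a, b) ∈ T := by
    simp [PrefInstance.rowSet]
  have memB : ∀ a b, a ∈ PrefInstance.colSet T b ↔ (a, b) ∈ T := by
    simp [PrefInstance.colSet]
  -- Each `(a, b) ∈ T` is realized by the clone of `a` holding `b` and the clone of `b` holding `a`.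
  set T' : Finset (I.CloneA × I.CloneB) := Finset.univ.filter fun e =>
    qA e.1.1 e.1.2 = some e.2.1 ∧ qB e.2.1 e.2.2 = some e.1.1 with hT'
  have memT' : ∀ e, e ∈ T' ↔
      qA e.1.1 e.1.2 = some e.2.1 ∧ qB e.2.1 e.2.2 = some e.1.1 := by
    simp [hT']
  have hM₁ : ∀ e ∈ T', ∀ f ∈ T', e.1 = f.1 → e = f := by
    rintro ⟨x, b, j⟩ he ⟨x', b', j'⟩ hf (rfl : x = x')
    obtain ⟨he₁, he₂⟩ := (memT' _).1 he
    obtain ⟨hf₁, hf₂⟩ := (memT' _).1 hf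
    obtain rfl : b = b' := Option.some_injective _ (he₁.symm.trans hf₁)
    obtain rfl : j = j' := (hqB b).2.2 _ _ _ he₂ hf₂
    rfl
  have hM₂ : ∀ e ∈ T', ∀ f ∈ T', e.2 = f.2 → e = f := by
    rintro ⟨⟨a, i⟩, y⟩ he ⟨⟨a', i'⟩, y'⟩ hf (rfl : y = y')
    obtain ⟨he₁, he₂⟩ := (memT' _).1 he
    obtain ⟨hf₁, hf₂⟩ := (memT' _).1 hf
    obtain rfl : a = a' := Option.some_injective _ (he₂.symm.trans hf₂)
    obtain rfl : i = i' := (hqA a).2.2 _ _ _ he₁ hf₁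
    rfl
  refine ⟨T', ⟨hM₁, hM₂⟩, ?_, ?_⟩
  · rintro ⟨⟨a, i⟩, ⟨b, j⟩⟩ he
    obtain ⟨he₁, he₂⟩ := (memT' _).1 he
    have hab : (a, b) ∈ T := (memA a b).1 ((hqA a).1 _ _ he₁)
    by_cases habN : (a, b) ∈ N
    · right
      obtain ⟨i', j', hij⟩ := hN'.exists_mem habN
      have h1 : qA a i' = some b := hA₁ a i' b
        (Option.map_eq_some_iff.2 ⟨_, (hN'.partnerA_eq_some _ _).2 hij, rfl⟩) ((memA a b).2 hab)
      have h2 : qB b j' = some a := hB₁ b j' a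
        (Option.map_eq_some_iff.2 ⟨_, (hN'.partnerB_eq_some _ _).2 hij, rfl⟩) ((memB a b).2 hab)
      obtain rfl : i = i' := (hqA a).2.2 _ _ _ he₁ h1
      obtain rfl : j = j' := (hqB b).2.2 _ _ _ he₂ h2
      exact hij
    · exact Or.inl ⟨hT.1 hab, habN⟩
  · have qA_none : ∀ x : I.CloneA, (∀ y, (x, y) ∉ T') → qA x.1 x.2 = none := by
      rintro ⟨a, i⟩ hx
      by_contra hne
      obtain ⟨b, hb⟩ := Option.ne_none_iff_exists'.1 hne
      obtain ⟨j, hj⟩ := (hqB b).2.1 a ((memB a b).2 ((memA a b).1 ((hqA a).1 _ _ hb)))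
      exact hx ⟨b, j⟩ ((memT' _).2 ⟨hb, hj⟩)
    have qB_none : ∀ y : I.CloneB, (∀ x, (x, y) ∉ T') → qB y.1 y.2 = none := by
      rintro ⟨b, j⟩ hy
      by_contra hne
      obtain ⟨a, ha⟩ := Option.ne_none_iff_exists'.1 hne
      obtain ⟨i, hi⟩ := (hqA a).2.1 b ((memA a b).2 ((memB a b).1 ((hqB b).1 _ _ ha)))
      exact hy ⟨a, i⟩ ((memT' _).2 ⟨hi, ha⟩)
    have sA := sum_votes_eq T' Prod.fst hM₁ (fun x => I.rankA x.1) (fun x => qA x.1 x.2)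
      (I.partnerA N') Sigma.fst (fun e => e.2.1) (fun e he => ((memT' e).1 he).1)
      (fun x => if ∀ y, (x, y) ∉ T' then (if ∃ y, (x, y) ∈ N' then (-1 : ℤ) else 0) else 0)
      (fun e he => if_neg fun h => h e.2 he)
      (fun x hx => by
        have hx' : ∀ y, (x, y) ∉ T' := fun y hy => hx _ hy rfl
        rw [if_pos hx', qA_none x hx', PrefInstance.vote_none_partnerA])
    have sB := sum_votes_eq T' Prod.snd hM₂ (fun y => I.rankB y.1) (fun y => qB y.1 y.2)
      (I.partnerB N') Sigma.fst (fun e => e.1.1) (fun e he => ((memT' e).1 he).2)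
      (fun y => if ∀ x, (x, y) ∉ T' then (if ∃ x, (x, y) ∈ N' then (-1 : ℤ) else 0) else 0)
      (fun e he => if_neg fun h => h e.1 he)
      (fun y hy => by
        have hy' : ∀ x, (x, y) ∉ T' := fun x hx => hy _ hx rfl
        rw [if_pos hy', qB_none y hy', PrefInstance.vote_none_partnerB])
    have tA : ∑ x : I.CloneA, vote (I.rankA x.1) (qA x.1 x.2)
        (Option.map Sigma.fst (I.partnerA N' x)) = - ∑ a, I.DeltaA N T a := by
      rw [Fintype.sum_sigma, ← Finset.sum_neg_distrib]
      exact Finset.sum_congr rfl fun a _ => hA₂ a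
    have tB : ∑ y : I.CloneB, vote (I.rankB y.1) (qB y.1 y.2)
        (Option.map Sigma.fst (I.partnerB N' y)) = - ∑ b, I.DeltaB N T b := by
      rw [Fintype.sum_sigma, ← Finset.sum_neg_distrib]
      exact Finset.sum_congr rfl fun b _ => hB₂ b
    unfold PrefInstance.wtTotal PrefInstance.wtE PrefInstance.Delta
    rw [Finset.sum_add_distrib]
    linarith
end

section
/- Every pairwise-stable matching in G is a popular matching in G. -/
theorem sum_range_getD {γ : Type*} (f : γ → ℤ) (d : γ) (l : List γ) :
    ∑ i ∈ Finset.range l.length, f (l.getD i d) = (l.map f).sum := by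
  induction l with
  | nil => simp
  | cons x l ih =>
    rw [List.length_cons, Finset.sum_range_succ']
    simp only [List.getD_cons_succ, List.getD_cons_zero, ih, List.map_cons, List.sum_cons]
    ring

theorem card_sdiff_le_kOf {β : Type*} [DecidableEq β] (S T : Finset β) :
    (S \ T).card ≤ kOf S T ∧ (T \ S).card ≤ kOf S T := by
  have h1 := Finset.card_sdiff_add_card_inter S T
  have h2 := Finset.card_sdiff_add_card_inter T S
  rw [Finset.inter_comm] at h2
  unfold kOf
  omega

theorem padded_getD {β : Type*} [DecidableEq β] (S T : Finset β) (k i : ℕ) :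
    (∃ x ∈ S \ T, (padded S T k).getD i none = some x) ∨
      ((S \ T).card ≤ i ∧ (padded S T k).getD i none = none) := by
  unfold padded
  rcases lt_or_ge i (S \ T).card with h | h
  · left
    have h' : i < (S \ T).toList.length := by simpa using h
    refine ⟨(S \ T).toList[i], ?_, ?_⟩
    · rw [← Finset.mem_toList]; exact List.getElem_mem h'
    · rw [List.getD_append _ _ _ _ (by simpa using h), List.getD_eq_getElem _ _ (by simpa using h)]
      simp
  · right
    refine ⟨h, ?_⟩
    rw [List.getD_append_right _ _ _ _ (by simpa using h)]
    simp [List.getD_eq_getElem?_getD, List.getElem?_replicate]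
    split_ifs <;> rfl

/-- Weights `w` that bound from below every vote against an element of `T ∖ S` that can occur in a
pairing also bound `deltaSet r S T`. An element of `T ∖ S` can be paired with null only if
`S.card < T.card`. -/
theorem sum_le_deltaSet {β : Type*} [DecidableEq β] (r : β → ℕ) (S T : Finset β) (w : β → ℤ)
    (h1 : S.card < T.card → ∀ v ∈ T \ S, w v ≤ -1)
    (h2 : ∀ x ∈ S \ T, ∀ v ∈ T \ S, w v ≤ vote r (some x) (some v)) :
    ∑ v ∈ T \ S, w v ≤ deltaSet r S T := by
  unfold deltaSet
  refine Finset.le_inf' _ _ fun σ _ => ?_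
  obtain ⟨hk1, hk2⟩ := card_sdiff_le_kOf S T
  have hnull : (S \ T).card < kOf S T → S.card < T.card := by
    have h := Finset.card_sdiff_add_card_inter S T
    unfold kOf
    omega
  generalize hk : kOf S T = k at *
  let g : Option β → ℤ := fun o => o.elim 0 w
  have hlen : (padded T S k).length = k := by
    simp [padded]; omega
  have hsum : ∑ v ∈ T \ S, w v = ∑ i : Fin k, g ((padded T S k).getD (σ i : ℕ) none) := by
    rw [Equiv.sum_comp σ (fun j : Fin k => g ((padded T S k).getD (j : ℕ) none)),
      Fin.sum_univ_eq_sum_range (fun j => g ((padded T S k).getD j none)) k]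
    have h := sum_range_getD g none (padded T S k)
    rw [hlen] at h
    rw [h]
    simp [padded, g, Function.comp_def]
  rw [hsum]
  refine Finset.sum_le_sum fun i _ => ?_
  rcases padded_getD S T k i with ⟨x, hx, ex⟩ | ⟨hi, ex⟩ <;>
    rcases padded_getD T S k (σ i) with ⟨v, hv, ev⟩ | ⟨-, ev⟩ <;> rw [ex, ev]
  · exact h2 x hx v hv
  · simp [g, vote]
  · exact h1 (hnull (lt_of_le_of_lt hi i.isLt)) v hv
  · simp [g, vote]

open Classical in
/-- The weight of `v` at a vertex with rank function `r`, capacity `c` and set of partners `S`: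
`-1` if the vertex has a free slot or prefers `v` to some partner, and `1` otherwise. -/
noncomputable def weight {β : Type*} (r : β → ℕ) (c : ℕ) (S : Finset β) (v : β) : ℤ :=
  if S.card < c ∨ ∃ x ∈ S, r v < r x then -1 else 1

theorem sum_weight_le_deltaSet {β : Type*} [DecidableEq β] (r : β → ℕ) (c : ℕ) (S T : Finset β)
    (N : Set β) (hr : Set.InjOn r N) (hSN : ∀ x ∈ S, x ∈ N) (hTN : ∀ x ∈ T, x ∈ N)
    (hT : T.card ≤ c) :
    ∑ v ∈ T \ S, weight r c S v ≤ deltaSet r S T := by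
  refine sum_le_deltaSet r S T _ (fun h v _ => ?_) (fun x hx v hv => ?_)
  · rw [weight, if_pos (Or.inl (h.trans_le hT))]
  · rw [Finset.mem_sdiff] at hx hv
    have hne : x ≠ v := fun h => hv.2 (h ▸ hx.1)
    have hrne : r x ≠ r v := fun h => hne (hr (hSN x hx.1) (hTN v hv.1) h)
    simp only [vote, if_neg hne]
    by_cases hlt : r x < r v
    · rw [if_pos hlt, weight]
      split_ifs <;> norm_num
    · rw [if_neg hlt, weight, if_pos (Or.inr ⟨x, hx.1, by omega⟩)]

/-- Every pairwise-stable matching in `G` is a popular matching in `G`. -/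
theorem statement5 {α β : Type*} [Fintype α] [Fintype β] [DecidableEq α] [DecidableEq β]
    (I : PrefInstance α β) (S : Finset (α × β)) (hS : I.Stable S) :
    I.Popular S := by
  obtain ⟨hM, hst⟩ := hS
  refine ⟨hM, fun T hT => ?_⟩
  let wA : α → β → ℤ := fun a => weight (I.rankA a) (I.capA a) (PrefInstance.rowSet S a)
  let wB : β → α → ℤ := fun b => weight (I.rankB b) (I.capB b) (PrefInstance.colSet S b)
  have hA : ∀ a, (∑ b, if (a, b) ∈ T \ S then wA a b else 0) ≤ I.DeltaA S T a := by
    intro a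
    have h := sum_weight_le_deltaSet (I.rankA a) (I.capA a) (PrefInstance.rowSet S a)
      (PrefInstance.rowSet T a) _ (I.rankA_injOn a)
      (fun x hx => hM.1 (by simpa [PrefInstance.rowSet] using hx))
      (fun x hx => hT.1 (by simpa [PrefInstance.rowSet] using hx)) (hT.2.1 a)
    refine le_of_eq_of_le ?_ h
    rw [← Finset.sum_filter]
    refine Finset.sum_congr ?_ fun _ _ => rfl
    ext b
    simp [PrefInstance.rowSet]
  have hB : ∀ b, (∑ a, if (a, b) ∈ T \ S then wB b a else 0) ≤ I.DeltaB S T b := by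
    intro b
    have h := sum_weight_le_deltaSet (I.rankB b) (I.capB b) (PrefInstance.colSet S b)
      (PrefInstance.colSet T b) _ (I.rankB_injOn b)
      (fun x hx => hM.1 (by simpa [PrefInstance.colSet] using hx))
      (fun x hx => hT.1 (by simpa [PrefInstance.colSet] using hx)) (hT.2.2 b)
    refine le_of_eq_of_le ?_ h
    rw [← Finset.sum_filter]
    refine Finset.sum_congr ?_ fun _ _ => rfl
    ext a
    simp [PrefInstance.colSet]
  have hAs := Finset.sum_le_sum fun a (_ : a ∈ Finset.univ) => hA a
  have hBs := Finset.sum_le_sum fun b (_ : b ∈ Finset.univ) => hB b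
  rw [Finset.sum_comm] at hBs
  refine le_trans ?_ (add_le_add hAs hBs)
  simp only [← Finset.sum_add_distrib]
  refine Finset.sum_nonneg fun a _ => Finset.sum_nonneg fun b _ => ?_
  split_ifs with hab
  · rw [Finset.mem_sdiff] at hab
    have hnb := hst a b
    simp only [wA, wB, weight]
    split_ifs with p q
    · exact absurd ⟨hT.1 hab.1, hab.2, p, q⟩ hnb
    all_goals norm_num
  · norm_num
end
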